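/- arXiv:1902.01594 — 3 statements merged into one kernel-verified Lean document; each statement's English description precedes it below -/
import Mathlib

section
/- Let (X,d) be a geodesic metric space, R > 0, and p ∈ X a point satisfying the locally extendable geodesics condition with parameter δ = R and the local rough Busemann (LRB) condition with parameters H = R and some K > 0. Let 0 < ε < π/2 and suppose that every (β(ε)R/K)-separated subset of the sphere S_R(p) = {y : d(p,y) = R} has cardinality less than L ∈ ℕ. Then p satisfies the ATB*(ε) condition with respect to any quasi-bicombing Γ on X, with constants L and R. -/
/-- A minimizing geodesic in a metric space, parametrized by arc length on `[0, len]`. -/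
structure MinGeodesic (X : Type*) [MetricSpace X] where
  len : ℝ
  len_nonneg : 0 ≤ len
  toFun : ℝ → X
  isom : ∀ s ∈ Set.Icc (0 : ℝ) len, ∀ t ∈ Set.Icc (0 : ℝ) len,
    dist (toFun s) (toFun t) = |s - t|

/-- The image (trace) of a minimizing geodesic. -/
def MinGeodesic.image {X : Type*} [MetricSpace X] (γ : MinGeodesic X) : Set X :=
  γ.toFun '' Set.Icc 0 γ.len

/-- A quasi-bicombing: a set of minimizing geodesics joining every pair of points. -/
def IsQuasiBicombing {X : Type*} [MetricSpace X] (Γ : Set (MinGeodesic X)) : Prop :=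
  ∀ x y : X, ∃ γ ∈ Γ, γ.toFun 0 = x ∧ γ.toFun γ.len = y

/-- The constant `β(ε) = (1 - cos ε) sin ε / (2 (1 + sin ε))`. -/
noncomputable def beta (ε : ℝ) : ℝ :=
  (1 - Real.cos ε) * Real.sin ε / (2 * (1 + Real.sin ε))

/-- The point `p` satisfies the `ATB*(ε)` condition with respect to the
quasi-bicombing `Γ`, with constants `L` and `R`. -/
def ATBStar {X : Type*} [MetricSpace X] (ε : ℝ) (Γ : Set (MinGeodesic X))
    (p : X) (L : ℕ) (R : ℝ) : Prop :=
  ∀ (y : Fin L → X) (g : Fin L → MinGeodesic X),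
    (∀ i, y i ∈ Metric.ball p R ∧ y i ≠ p) →
    (∀ i, g i ∈ Γ ∧ (g i).toFun 0 = p ∧ (g i).toFun (g i).len = y i) →
    ∃ i j, i ≠ j ∧ ∃ x ∈ (g j).image, dist (y i) x ≤ beta ε * dist p (y i)

/-!
Extend each of the `L` geodesics from `p` to length `R`. Fewer than `L` points of the sphere can be
`β R / K`-separated, so two of the new endpoints are closer than that, and the rough Busemann
inequality contracts this distance by the factor `K s / R` at arc length `s`: the extended geodesics
are within `β s` of each other there. Take `s` to be the smaller of the two original lengths.
-/

open Set Metric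

/-- The locally extendable geodesics condition at `p` with parameter `δ`: every minimizing geodesic
inside the closed `δ`-ball around `p` extends, forwards, to one that is longer by `δ`. -/
def LocallyExtendableAt {X : Type*} [MetricSpace X] (p : X) (δ : ℝ) : Prop :=
  ∀ γ : MinGeodesic X, γ.image ⊆ closedBall p δ →
    ∃ γ' : MinGeodesic X, γ'.len = γ.len + δ ∧ EqOn γ'.toFun γ.toFun (Icc 0 γ.len)

/-- The local rough Busemann (LRB) condition at `p` with parameters `H` and `K`: minimizing
geodesics inside the closed `H`-ball around `p` that share a starting point spread apart as in a
Busemann space, up to the factor `K`. -/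
def LocalRoughBusemannAt {X : Type*} [MetricSpace X] (p : X) (H K : ℝ) : Prop :=
  ∀ γ₁ γ₂ : MinGeodesic X, γ₁.image ⊆ closedBall p H → γ₂.image ⊆ closedBall p H →
    γ₁.toFun 0 = γ₂.toFun 0 → ∀ t ∈ Icc (0 : ℝ) 1,
      dist (γ₁.toFun (t * γ₁.len)) (γ₂.toFun (t * γ₂.len)) ≤
        K * t * dist (γ₁.toFun γ₁.len) (γ₂.toFun γ₂.len)

theorem beta_pos {ε : ℝ} (hε₀ : 0 < ε) (hεπ : ε < Real.pi) : 0 < beta ε := by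
  have hsin : 0 < Real.sin ε := Real.sin_pos_of_pos_of_lt_pi hε₀ hεπ
  have hcos : Real.cos ε < 1 := by
    simpa only [Real.cos_zero] using Real.cos_lt_cos_of_nonneg_of_le_pi le_rfl hεπ.le hε₀
  exact div_pos (mul_pos (sub_pos.2 hcos) hsin) (by positivity)

theorem exists_ne_dist_lt_of_card_lt {X ι : Type*} [PseudoMetricSpace X] [Fintype ι]
    {S : Set X} {r : ℝ} (hr : 0 < r)
    (hS : ∀ s : Finset X, (s : Set X) ⊆ S → (s : Set X).Pairwise (fun a b => r ≤ dist a b) →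
      s.card < Fintype.card ι)
    {f : ι → X} (hf : ∀ i, f i ∈ S) :
    ∃ i j, i ≠ j ∧ dist (f i) (f j) < r := by
  classical
  by_contra! hfar
  have hinj : Function.Injective f := fun i j hij => by
    by_contra hne
    exact (hr.trans_le (hfar i j hne)).ne' (by rw [hij, dist_self])
  have hcoe : ((Finset.univ.image f : Finset X) : Set X) = range f := by
    rw [Finset.coe_image, Finset.coe_univ, image_univ]
  have hcard : (Finset.univ.image f).card < Fintype.card ι := by
    refine hS _ (hcoe ▸ range_subset_iff.2 hf) ?_
    rw [hcoe]
    rintro _ ⟨i, rfl⟩ _ ⟨j, rfl⟩ hij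
    exact hfar i j (ne_of_apply_ne f hij)
  rw [Finset.card_image_of_injective _ hinj, Finset.card_univ] at hcard
  exact hcard.false

namespace MinGeodesic

variable {X : Type*} [MetricSpace X]

theorem dist_toFun_zero (γ : MinGeodesic X) {t : ℝ} (ht : t ∈ Icc 0 γ.len) :
    dist (γ.toFun 0) (γ.toFun t) = t := by
  rw [γ.isom 0 (left_mem_Icc.2 γ.len_nonneg) t ht, zero_sub, abs_neg, abs_of_nonneg ht.1]

theorem dist_endpoints (γ : MinGeodesic X) : dist (γ.toFun 0) (γ.toFun γ.len) = γ.len :=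
  γ.dist_toFun_zero (right_mem_Icc.2 γ.len_nonneg)

theorem image_subset_closedBall (γ : MinGeodesic X) {r : ℝ} (hr : γ.len ≤ r) :
    γ.image ⊆ closedBall (γ.toFun 0) r := by
  rintro _ ⟨t, ht, rfl⟩
  rw [mem_closedBall', γ.dist_toFun_zero ht]
  exact ht.2.trans hr

/-- The initial segment of length `ℓ` of a minimizing geodesic; the parametrization is unchanged. -/
def initialSegment (γ : MinGeodesic X) (ℓ : ℝ) (hℓ₀ : 0 ≤ ℓ) (hℓ : ℓ ≤ γ.len) : MinGeodesic X where
  len := ℓ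
  len_nonneg := hℓ₀
  toFun := γ.toFun
  isom s hs t ht := γ.isom s (Icc_subset_Icc_right hℓ hs) t (Icc_subset_Icc_right hℓ ht)

end MinGeodesic

section LocalConditions

variable {X : Type*} [MetricSpace X] {p : X}

theorem LocallyExtendableAt.exists_extension {δ ℓ : ℝ} (hp : LocallyExtendableAt p δ)
    (γ : MinGeodesic X) (hγ₀ : γ.toFun 0 = p) (hγδ : γ.len ≤ δ) (hγℓ : γ.len ≤ ℓ)
    (hℓ : ℓ ≤ γ.len + δ) :
    ∃ γ' : MinGeodesic X, γ'.len = ℓ ∧ EqOn γ'.toFun γ.toFun (Icc 0 γ.len) := by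
  obtain ⟨γ', hlen, heq⟩ := hp γ (hγ₀ ▸ γ.image_subset_closedBall hγδ)
  exact ⟨γ'.initialSegment ℓ (γ.len_nonneg.trans hγℓ) (hlen ▸ hℓ), rfl, heq⟩

theorem LocalRoughBusemannAt.dist_le_mul {H K ℓ c s : ℝ} (hp : LocalRoughBusemannAt p H K)
    (hK : 0 < K) (hℓ₀ : 0 < ℓ) (hℓ : ℓ ≤ H) {γ₁ γ₂ : MinGeodesic X}
    (h₁ : γ₁.toFun 0 = p) (h₂ : γ₂.toFun 0 = p) (hlen₁ : γ₁.len = ℓ) (hlen₂ : γ₂.len = ℓ)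
    (hend : dist (γ₁.toFun ℓ) (γ₂.toFun ℓ) ≤ c * ℓ / K) (hs : s ∈ Icc 0 ℓ) :
    dist (γ₁.toFun s) (γ₂.toFun s) ≤ c * s := by
  have hball {γ : MinGeodesic X} (h₀ : γ.toFun 0 = p) (hlen : γ.len = ℓ) :
      γ.image ⊆ closedBall p H := h₀ ▸ γ.image_subset_closedBall (hlen.trans_le hℓ)
  have hsℓ : 0 ≤ s / ℓ := div_nonneg hs.1 hℓ₀.le
  have hLRB := hp γ₁ γ₂ (hball h₁ hlen₁) (hball h₂ hlen₂) (h₁.trans h₂.symm) (s / ℓ)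
    ⟨hsℓ, (div_le_one hℓ₀).2 hs.2⟩
  rw [hlen₁, hlen₂, div_mul_cancel₀ s hℓ₀.ne'] at hLRB
  calc dist (γ₁.toFun s) (γ₂.toFun s)
      ≤ K * (s / ℓ) * dist (γ₁.toFun ℓ) (γ₂.toFun ℓ) := hLRB
    _ ≤ K * (s / ℓ) * (c * ℓ / K) := by gcongr
    _ = c * s := by field_simp

theorem atbStar_of_extendable_LRB_general {R K ε : ℝ} {L : ℕ} (hR : 0 < R)
    (hext : LocallyExtendableAt p R) (hK : 0 < K) (hLRB : LocalRoughBusemannAt p R K)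
    (hβ : 0 < beta ε)
    (hsep : ∀ s : Finset X, (s : Set X) ⊆ sphere p R →
      (s : Set X).Pairwise (fun a b => beta ε * R / K ≤ dist a b) → s.card < L)
    (Γ : Set (MinGeodesic X)) :
    ATBStar ε Γ p L R := by
  intro y g hy hg
  have hlen i : dist p (y i) = (g i).len := by
    rw [← (g i).dist_endpoints, (hg i).2.1, (hg i).2.2]
  have hlt i : (g i).len < R := hlen i ▸ mem_ball'.1 (hy i).1
  choose γ hγlen hγ using fun i => hext.exists_extension (g i) (hg i).2.1 (hlt i).le (hlt i).le
    (le_add_of_nonneg_left (g i).len_nonneg)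
  have hγ₀ i : (γ i).toFun 0 = p :=
    (hγ i (left_mem_Icc.2 (g i).len_nonneg)).trans (hg i).2.1
  have hsphere i : (γ i).toFun R ∈ sphere p R := by
    rw [mem_sphere', ← hγ₀ i, (γ i).dist_toFun_zero ⟨hR.le, (hγlen i).ge⟩]
  obtain ⟨i, j, hij, hclose⟩ := exists_ne_dist_lt_of_card_lt
    (div_pos (mul_pos hβ hR) hK) (by simpa only [Fintype.card_fin] using hsep) hsphere
  wlog hle : (g i).len ≤ (g j).len generalizing i j
  · exact this j i hij.symm (by rwa [dist_comm]) (le_of_not_ge hle)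
  have hmem : (g i).len ∈ Icc 0 (g j).len := ⟨(g i).len_nonneg, hle⟩
  refine ⟨i, j, hij, (g j).toFun (g i).len, mem_image_of_mem _ hmem, ?_⟩
  rw [hlen, ← (hg i).2.2, ← hγ i (right_mem_Icc.2 (g i).len_nonneg), ← hγ j hmem]
  exact hLRB.dist_le_mul hK hR le_rfl (hγ₀ i) (hγ₀ j) (hγlen i) (hγlen j) hclose.le
    ⟨(g i).len_nonneg, (hlt i).le⟩

end LocalConditions

/-- In a geodesic space, a point with locally extendable geodesics (parameter `δ = R`)
satisfying the local rough Busemann condition (`H = R`, constant `K`), and for which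
every `(β(ε)R/K)`-separated subset of the sphere `S_R(p)` has fewer than `L` points,
satisfies `ATB*(ε)` with respect to any quasi-bicombing, with constants `L` and `R`. -/
theorem atbStar_of_extendable_LRB
    {X : Type*} [MetricSpace X]
    (hgeo : ∀ x y : X, ∃ γ : MinGeodesic X, γ.toFun 0 = x ∧ γ.toFun γ.len = y)
    (p : X) (R : ℝ) (hR : 0 < R)
    (hext : ∀ γ : MinGeodesic X, γ.image ⊆ Metric.closedBall p R →
      ∃ γ' : MinGeodesic X, γ'.len = γ.len + R ∧
        ∀ t ∈ Set.Icc (0 : ℝ) γ.len, γ'.toFun t = γ.toFun t)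
    (K : ℝ) (hK : 0 < K)
    (hLRB : ∀ γ₁ γ₂ : MinGeodesic X, γ₁.image ⊆ Metric.closedBall p R →
      γ₂.image ⊆ Metric.closedBall p R → γ₁.toFun 0 = γ₂.toFun 0 →
      ∀ t ∈ Set.Icc (0 : ℝ) 1,
        dist (γ₁.toFun (t * γ₁.len)) (γ₂.toFun (t * γ₂.len)) ≤
          K * t * dist (γ₁.toFun γ₁.len) (γ₂.toFun γ₂.len))
    (ε : ℝ) (hε0 : 0 < ε) (hε : ε < Real.pi / 2) (L : ℕ)
    (hsep : ∀ s : Finset X, (↑s : Set X) ⊆ Metric.sphere p R →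
      (∀ a ∈ s, ∀ b ∈ s, a ≠ b → beta ε * R / K ≤ dist a b) → s.card < L)
    (Γ : Set (MinGeodesic X)) (hΓ : IsQuasiBicombing Γ) :
    ATBStar ε Γ p L R :=
  atbStar_of_extendable_LRB_general hR hext hK hLRB
    (beta_pos hε0 (hε.trans (half_lt_self Real.pi_pos)))
    (fun s hs h => hsep s hs fun _ ha _ hb => h ha hb) Γ
end

section
/- Let (X,d) be a proper geodesic metric space on which Γ = ℤⁿ acts cocompactly and properly discontinuously by isometries, and suppose there is a continuous map F : X → ℝⁿ equivariant with respect to the given action of ℤⁿ on X and the standard action of ℤⁿ on ℝⁿ by translations. Fix x₀ ∈ X. Then for every g ∈ Γ the limit ‖g‖ := lim_{k→∞} d(x₀, g^k(x₀))/k exists; there is a norm N on ℝⁿ with N(g) = ‖g‖ for all g ∈ ℤⁿ; and there is a constant C ≥ 0 such that ‖g‖ ≤ d(x₀, g(x₀)) ≤ ‖g‖ + C for all g ∈ Γ. In particular, X is at finite Gromov–Hausdorff distance from (ℝⁿ, N). -/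
/-!
Write `f g` for the displacement of `x₀` under `g`. It is subadditive, so `f (k • g) / k` converges
to a limit at most `f g`. The error is bounded as soon as `2 * f g ≤ f (2 • g) + C` for a uniform
`C`, because this inequality may be iterated along the powers of `2`.

To prove it, cut a geodesic from `x₀` to `(2 • g) +ᵥ x₀` into short steps between orbit points. If
a set `S` of steps adds up to `p` and its complement to `q`, then `p + q = 2 • g`. It is enough to
find an `S` made of boundedly many segments of the geodesic for which `p - q` is bounded: then
`f p + f q ≤ f (2 • g) + C`, while `p` and `q` are close to `g`. The coordinates of `p - q` are odd
under complementation, so such an `S` is an approximate common zero given by Borsuk-Ulam. Adding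
the steps to `S` one after the other is a homotopy from the identity to an even map, and it
increases the number of segments by a bounded amount.

The discrete Borsuk-Ulam theorem is proved with cochains modulo `2`. Let `A` be the pullback along
the antipode, `K` the prism operator of the homotopy and `T = (1 + A) K`. From
`T d = 1 + A + d T` and `(1 + A) T = 0` one gets `T ^ (k + 1) d = T ^ k (1 + A) + d T ^ (k + 1)`.
Hence, evaluated at a vertex, `T ^ k` takes the cup product of the coboundaries of `k` odd labels
to `1`. So this cup product is nonzero on some simplex, along whose vertices every label changes.
-/

open Filter Finset Topology

/-- Ordered cochains modulo `2` on the full simplex with vertex set `V`. All degrees are kept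
together: a list of length `k + 1` is a `k`-simplex, and `[]` is the augmentation simplex. -/
abbrev ListCochain (V : Type*) : Type _ := List V → ZMod 2

namespace ListCochain

variable {V : Type*}

/-- The simplicial coboundary, summing a cochain over the faces of a simplex. -/
def coboundary : Module.End (ZMod 2) (ListCochain V) where
  toFun f l := ∑ i ∈ range l.length, f (l.eraseIdx i)
  map_add' f g := by ext l; simp [sum_add_distrib]
  map_smul' c f := by ext l; simp [mul_sum]

/-- The pullback of cochains along a map of vertices. -/
def pullback (p : V → V) : Module.End (ZMod 2) (ListCochain V) :=
  LinearMap.funLeft (ZMod 2) (ZMod 2) (List.map p)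

/-- The prism operator between `p` and `q`, which sums a cochain over the simplices
`[p v₀, …, p vᵢ, q vᵢ, …, q vₖ]`. -/
def prism (p q : V → V) : Module.End (ZMod 2) (ListCochain V) where
  toFun f l := ∑ i ∈ range l.length, f ((l.take (i + 1)).map p ++ (l.drop i).map q)
  map_add' f g := by ext l; simp [sum_add_distrib]
  map_smul' c f := by ext l; simp [mul_sum]

lemma coboundary_apply (f : ListCochain V) (l : List V) :
    coboundary f l = ∑ i ∈ range l.length, f (l.eraseIdx i) := rfl

lemma pullback_apply (p : V → V) (f : ListCochain V) (l : List V) :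
    pullback p f l = f (l.map p) := rfl

lemma prism_apply (p q : V → V) (f : ListCochain V) (l : List V) :
    prism p q f l = ∑ i ∈ range l.length, f ((l.take (i + 1)).map p ++ (l.drop i).map q) := rfl

@[simp]
lemma coboundary_nil (f : ListCochain V) : coboundary f [] = 0 := rfl

@[simp]
lemma prism_nil (p q : V → V) (f : ListCochain V) : prism p q f [] = 0 := rfl

lemma coboundary_cons (f : ListCochain V) (x : V) (l : List V) :
    coboundary f (x :: l) = f l + coboundary (fun l' ↦ f (x :: l')) l := by
  simp [coboundary_apply, sum_range_succ', add_comm]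

lemma prism_cons (p q : V → V) (f : ListCochain V) (x : V) (l : List V) :
    prism p q f (x :: l) =
      f (p x :: q x :: l.map q) + prism p q (fun l' ↦ f (p x :: l')) l := by
  simp [prism_apply, sum_range_succ', add_comm]

lemma coboundary_coboundary (f : ListCochain V) (l : List V) :
    coboundary (coboundary f) l = 0 := by
  induction l generalizing f with
  | nil => rfl
  | cons x l ih =>
    have expand : (fun l' ↦ coboundary f (x :: l')) =
        f + coboundary (fun l' ↦ f (x :: l')) := funext (coboundary_cons f x)
    rw [coboundary_cons, expand, map_add, Pi.add_apply, ih, add_zero, CharTwo.add_self_eq_zero]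

lemma coboundary_mul_coboundary :
    (coboundary * coboundary : Module.End (ZMod 2) (ListCochain V)) = 0 :=
  LinearMap.ext fun f ↦ funext (coboundary_coboundary f)

lemma pullback_id : pullback (id : V → V) = 1 := by
  ext f l
  simp [pullback_apply]

lemma pullback_mul_pullback (p q : V → V) : pullback p * pullback q = pullback (q ∘ p) := by
  ext f l
  simp [pullback_apply]

lemma pullback_mul_coboundary (p : V → V) : pullback p * coboundary = coboundary * pullback p := by
  ext f l
  simp [pullback_apply, coboundary_apply, List.eraseIdx_map]

lemma prism_coboundary (p q : V → V) (f : ListCochain V) (l : List V) :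
    prism p q (coboundary f) l + coboundary (prism p q f) l = f (l.map p) + f (l.map q) := by
  induction l generalizing f with
  | nil => simp [CharTwo.add_self_eq_zero]
  | cons x l ih =>
    have expand_left : (fun l' ↦ coboundary f (p x :: l')) =
        f + coboundary (fun l' ↦ f (p x :: l')) := funext (coboundary_cons f (p x))
    have expand_right : (fun l' ↦ prism p q f (x :: l')) =
        pullback q (fun l' ↦ f (p x :: q x :: l')) + prism p q (fun l' ↦ f (p x :: l')) :=
      funext (prism_cons p q f x)
    have comm := congrFun (LinearMap.congr_fun (pullback_mul_coboundary q)
      (fun l' ↦ f (p x :: q x :: l'))) l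
    simp only [Module.End.mul_apply, pullback_apply] at comm
    rw [prism_cons, coboundary_cons _ (p x), coboundary_cons _ x, expand_left, expand_right,
      map_add, map_add, coboundary_cons _ (q x), Pi.add_apply, Pi.add_apply, ← comm, List.map_cons,
      List.map_cons]
    linear_combination ih (fun l' ↦ f (p x :: l')) + CharTwo.add_self_eq_zero (prism p q f l) +
      CharTwo.add_self_eq_zero (f (p x :: l.map q)) +
      CharTwo.add_self_eq_zero (coboundary (fun l' ↦ f (p x :: q x :: l')) (l.map q))

lemma prism_mul_coboundary_add (p q : V → V) :
    prism p q * coboundary + coboundary * prism p q = pullback p + pullback q :=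
  LinearMap.ext fun f ↦ funext (prism_coboundary p q f)

/-- The chain homotopy operator of the homotopy `g 0, …, g m`, stacking its `m` prisms. -/
def homotopyPrism (g : ℕ → V → V) (m : ℕ) : Module.End (ZMod 2) (ListCochain V) :=
  ∑ t ∈ range m, prism (g t) (g (t + 1))

lemma homotopyPrism_mul_coboundary_add (g : ℕ → V → V) (m : ℕ) :
    homotopyPrism g m * coboundary + coboundary * homotopyPrism g m =
      pullback (g 0) + pullback (g m) := by
  simp only [homotopyPrism, sum_mul, mul_sum, ← sum_add_distrib, prism_mul_coboundary_add]
  induction m with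
  | zero => simp [ZModModule.add_self]
  | succ m ih =>
    rw [sum_range_succ, ih, ZModModule.add_add_add_cancel]

/-- The product of a cochain with the `0`-cochain `e`, evaluated at the first vertex. -/
def vertexMul (e : V → ZMod 2) (f : ListCochain V) : ListCochain V
  | [] => 0
  | x :: l => e x * f (x :: l)

/-- The cup product of the coboundaries of the `0`-cochains in a list. It is built as an iterated
coboundary from the indicator of the augmentation simplex `[]`. -/
def signCochain : List (V → ZMod 2) → ListCochain V
  | [] => coboundary fun l ↦ if l.isEmpty then 1 else 0
  | e :: es => coboundary (vertexMul e (signCochain es))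

@[simp]
lemma signCochain_nil_simplex (es : List (V → ZMod 2)) : signCochain es [] = 0 := by
  cases es <;> rfl

lemma signCochain_nil_vertex (v : V) : signCochain [] [v] = 1 := by
  simp [signCochain, coboundary_cons]

lemma coboundary_signCochain (es : List (V → ZMod 2)) : coboundary (signCochain es) = 0 := by
  cases es <;> exact LinearMap.congr_fun coboundary_mul_coboundary _

lemma signCochain_cons_cons (e : V → ZMod 2) (es : List (V → ZMod 2)) (x y : V) (l : List V) :
    signCochain (e :: es) (x :: y :: l) = (e x + e y) * signCochain es (y :: l) := by
  have closed : coboundary (signCochain es) (x :: y :: l) = 0 := by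
    rw [coboundary_signCochain, Pi.zero_apply]
  have pull_out : (fun l' ↦ vertexMul e (signCochain es) (x :: l')) =
      e x • fun l' ↦ signCochain es (x :: l') := rfl
  rw [coboundary_cons] at closed
  rw [signCochain, coboundary_cons, pull_out, map_smul, Pi.smul_apply, smul_eq_mul, vertexMul]
  linear_combination e x * closed - CharTwo.add_self_eq_zero (e x * signCochain es (y :: l))

lemma pullback_vertexMul {p : V → V} {e : V → ZMod 2} (he : ∀ v, e (p v) = e v + 1)
    {f : ListCochain V} (hf : f [] = 0) :
    pullback p (vertexMul e f) = vertexMul e (pullback p f) + pullback p f := by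
  ext (_ | ⟨x, l⟩)
  · simp [pullback_apply, vertexMul, hf]
  · simp only [pullback_apply, vertexMul, Pi.add_apply, List.map_cons, he]
    ring

lemma pullback_signCochain {p : V → V} {es : List (V → ZMod 2)}
    (hes : ∀ e ∈ es, ∀ v, e (p v) = e v + 1) : pullback p (signCochain es) = signCochain es := by
  have comm (f : ListCochain V) : pullback p (coboundary f) = coboundary (pullback p f) :=
    LinearMap.congr_fun (pullback_mul_coboundary p) f
  induction es with
  | nil =>
    rw [signCochain, comm]
    congr 1
    ext l
    simp [pullback_apply]
  | cons e es ih =>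
    obtain ⟨he, hes⟩ := List.forall_mem_cons.mp hes
    rw [signCochain, comm, pullback_vertexMul he (signCochain_nil_simplex es), ih hes, map_add,
      coboundary_signCochain, add_zero]

end ListCochain

/-- A discrete homotopy, in `length` steps, from the identity of a set `V` with an involution
`antipode` to an even map. The relation `Adj` expresses that two points of `V` are close. -/
structure AntipodalHomotopy (V : Type*) where
  antipode : V → V
  antipode_antipode : ∀ v, antipode (antipode v) = v
  length : ℕ
  stage : ℕ → V → V
  stage_zero : ∀ v, stage 0 v = v
  stage_length_antipode : ∀ v, stage length (antipode v) = stage length v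
  Adj : V → V → Prop
  adj_antipode : ∀ {v w}, Adj v w → Adj (antipode v) (antipode w)
  adj_stage : ∀ t {v w}, Adj v w → Adj (stage t v) (stage t w)
  adj_stage_succ : ∀ t v, Adj (stage t v) (stage (t + 1) v)

namespace AntipodalHomotopy

open ListCochain

variable {V : Type*} (H : AntipodalHomotopy V)

/-- The dual of the suspension `c ↦ K c + a K c` of chains, where the homotopy prism `K c` and its
antipode `a K c` are the two hemispheres. -/
def suspend : Module.End (ZMod 2) (ListCochain V) :=
  (1 + pullback H.antipode) * homotopyPrism H.stage H.length

@[simp]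
lemma suspend_nil (f : ListCochain V) : H.suspend f [] = 0 := by
  simp [suspend, homotopyPrism, pullback_apply]

lemma suspend_apply (f : ListCochain V) (l : List V) :
    H.suspend f l = homotopyPrism H.stage H.length f l +
      homotopyPrism H.stage H.length f (l.map H.antipode) := rfl

lemma one_add_pullback_antipode_mul_self :
    (1 + pullback H.antipode) * (1 + pullback H.antipode) = 0 := by
  have square : pullback H.antipode * pullback H.antipode = 1 := by
    rw [pullback_mul_pullback, ← pullback_id]
    exact congrArg pullback (funext H.antipode_antipode)
  rw [mul_add, mul_one, add_mul, one_mul, square, add_comm (pullback _), ZModModule.add_self]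

lemma suspend_mul_coboundary :
    H.suspend * coboundary = 1 + pullback H.antipode + coboundary * H.suspend := by
  set A := pullback H.antipode
  set K := homotopyPrism H.stage H.length
  set E := pullback (H.stage H.length)
  have even : A * E = E := by
    rw [pullback_mul_pullback]
    exact congrArg pullback (funext H.stage_length_antipode)
  have homotopy : K * coboundary = 1 + E + coboundary * K := by
    have start : pullback (H.stage 0) = 1 := by
      rw [← pullback_id]
      exact congrArg pullback (funext H.stage_zero)
    rw [← start, ← homotopyPrism_mul_coboundary_add, add_assoc, ZModModule.add_self, add_zero]
  calc (1 + A) * K * coboundary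
      = (1 + A) + (E + A * E) + (coboundary * K + A * coboundary * K) := by
        rw [mul_assoc, homotopy]; noncomm_ring
    _ = 1 + A + coboundary * ((1 + A) * K) := by
        rw [even, ZModModule.add_self, pullback_mul_coboundary]; noncomm_ring

lemma suspend_pow_succ_mul_coboundary (k : ℕ) :
    H.suspend ^ (k + 1) * coboundary =
      H.suspend ^ k * (1 + pullback H.antipode) + coboundary * H.suspend ^ (k + 1) := by
  have absorb : (1 + pullback H.antipode) * H.suspend = 0 := by
    rw [suspend, ← mul_assoc, one_add_pullback_antipode_mul_self, zero_mul]
  induction k with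
  | zero => simpa using H.suspend_mul_coboundary
  | succ k ih =>
    calc H.suspend ^ (k + 2) * coboundary
        = H.suspend * (H.suspend ^ (k + 1) * coboundary) := by rw [← mul_assoc, ← pow_succ']
      _ = H.suspend ^ (k + 1) * (1 + pullback H.antipode) +
            (H.suspend * coboundary) * H.suspend ^ (k + 1) := by
          rw [ih, mul_add, ← mul_assoc, ← mul_assoc, ← pow_succ']
      _ = H.suspend ^ (k + 1) * (1 + pullback H.antipode) +
            coboundary * H.suspend ^ (k + 2) := by
          rw [suspend_mul_coboundary, add_mul, mul_assoc coboundary, ← pow_succ',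
            pow_succ' _ k, ← mul_assoc, absorb, zero_mul, zero_add]

lemma suspend_pow_signCochain {es : List (V → ZMod 2)}
    (hes : ∀ e ∈ es, ∀ v, e (H.antipode v) = e v + 1) (v₀ : V) :
    (H.suspend ^ es.length) (signCochain es) [v₀] = 1 := by
  induction es with
  | nil => exact signCochain_nil_vertex v₀
  | cons e es ih =>
    obtain ⟨he, hes⟩ := List.forall_mem_cons.mp hes
    set f := vertexMul e (signCochain es)
    have symmetrize : f + pullback H.antipode f = signCochain es := by
      rw [pullback_vertexMul he (signCochain_nil_simplex es), pullback_signCochain hes,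
        ← add_assoc, ZModModule.add_self, zero_add]
    have boundary : coboundary ((H.suspend ^ (es.length + 1)) f) [v₀] = 0 := by
      simp [coboundary_cons, pow_succ', Module.End.mul_apply]
    have step := congrFun (LinearMap.congr_fun (H.suspend_pow_succ_mul_coboundary es.length) f) [v₀]
    simp only [Module.End.mul_apply, LinearMap.add_apply, Module.End.one_apply, symmetrize,
      Pi.add_apply, boundary, add_zero, ih hes] at step
    exact step

/-- The points obtained from `v₀` by antipodes and by `k` moves along the homotopy. -/
inductive Reachable (v₀ : V) : ℕ → V → Prop
  | base : Reachable v₀ 0 v₀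
  | antipode {k : ℕ} {v : V} : Reachable v₀ k v → Reachable v₀ k (H.antipode v)
  | stage {k t : ℕ} {v : V} :
      Reachable v₀ k v → t ≤ H.length → Reachable v₀ (k + 1) (H.stage t v)

variable {H}

lemma isChain_prism {l : List V} (hl : l.IsChain H.Adj) (t i : ℕ) :
    ((l.take (i + 1)).map (H.stage t) ++ (l.drop i).map (H.stage (t + 1))).IsChain H.Adj := by
  refine (List.isChain_map_of_isChain (H.stage t) (fun _ _ h ↦ H.adj_stage t h) (hl.take _)).append
    (List.isChain_map_of_isChain (H.stage (t + 1)) (fun _ _ h ↦ H.adj_stage _ h) (hl.drop _)) ?_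
  intro x hx y hy
  simp only [List.getLast?_map, List.head?_map, Option.mem_def, Option.map_eq_some_iff,
    List.getLast?_take, List.head?_drop] at hx hy
  obtain ⟨v, hv, rfl⟩ := hx
  obtain ⟨w, hw, rfl⟩ := hy
  obtain rfl : w = v := by simpa [hw] using hv
  exact H.adj_stage_succ t _

lemma exists_chain_of_suspend_pow_ne_zero {v₀ : V} {k : ℕ} {f : ListCochain V}
    (hf : (H.suspend ^ k) f [v₀] ≠ 0) :
    ∃ l : List V, l.IsChain H.Adj ∧ (∀ v ∈ l, H.Reachable v₀ k v) ∧ f l ≠ 0 := by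
  induction k generalizing f with
  | zero => exact ⟨[v₀], by simp, by simpa using Reachable.base, hf⟩
  | succ k ih =>
    rw [pow_succ, Module.End.mul_apply] at hf
    obtain ⟨l, hl, hlk, hfl⟩ := ih hf
    obtain ⟨l', hl', hlk', hfl'⟩ : ∃ l' : List V, l'.IsChain H.Adj ∧
        (∀ v ∈ l', H.Reachable v₀ k v) ∧ homotopyPrism H.stage H.length f l' ≠ 0 := by
      by_cases h : homotopyPrism H.stage H.length f l = 0
      · refine ⟨l.map H.antipode,
          List.isChain_map_of_isChain H.antipode (fun _ _ h ↦ H.adj_antipode h) hl, ?_, ?_⟩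
        · simpa using fun v hv ↦ (hlk v hv).antipode
        · simpa [suspend_apply, h] using hfl
      · exact ⟨l, hl, hlk, h⟩
    rw [homotopyPrism, LinearMap.sum_apply, Finset.sum_apply] at hfl'
    obtain ⟨t, ht, hft⟩ := exists_ne_zero_of_sum_ne_zero hfl'
    rw [prism_apply] at hft
    obtain ⟨i, -, hfi⟩ := exists_ne_zero_of_sum_ne_zero hft
    refine ⟨_, isChain_prism hl' t i, fun v hv ↦ ?_, hfi⟩
    rw [mem_range] at ht
    simp only [List.mem_append, List.mem_map] at hv
    rcases hv with ⟨w, hw, rfl⟩ | ⟨w, hw, rfl⟩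
    · exact (hlk' w (List.mem_of_mem_take hw)).stage ht.le
    · exact (hlk' w (List.mem_of_mem_drop hw)).stage ht

/-- A discrete Borsuk-Ulam theorem. By `signCochain_cons_cons`, the nonvanishing of the cup product
means that the labels `es` change one after the other along `l`. -/
theorem exists_chain_signCochain_ne_zero {es : List (V → ZMod 2)}
    (hes : ∀ e ∈ es, ∀ v, e (H.antipode v) = e v + 1) (v₀ : V) :
    ∃ l : List V, l.IsChain H.Adj ∧ (∀ v ∈ l, H.Reachable v₀ es.length v) ∧
      signCochain es l ≠ 0 :=
  exists_chain_of_suspend_pow_ne_zero (H.suspend_pow_signCochain hes v₀ ▸ one_ne_zero)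

section Approximate

variable {R : Type*} [AddCommGroup R] [LinearOrder R] [IsOrderedAddMonoid R]

/-- The sign of a function `h`, encoded in `ZMod 2`, with the values of `σ` breaking ties. -/
def signLabel (σ : V → ZMod 2) (h : V → R) (v : V) : ZMod 2 :=
  if h v = 0 then σ v else if 0 < h v then 1 else 0

lemma signLabel_antipode {σ : V → ZMod 2} (hσ : ∀ v, σ (H.antipode v) = σ v + 1) {h : V → R}
    (hh : ∀ v, h (H.antipode v) = -h v) (v : V) :
    signLabel σ h (H.antipode v) = signLabel σ h v + 1 := by
  rcases lt_trichotomy (h v) 0 with hv | hv | hv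
  · simp [signLabel, hh, hv, hv.ne, hv.le]
  · simp [signLabel, hh, hv, hσ]
  · simp [signLabel, hh, hv, hv.ne', hv.le, CharTwo.add_self_eq_zero]

lemma abs_le_abs_sub_of_signLabel_ne {σ : V → ZMod 2} {h : V → R} {v w : V}
    (hvw : signLabel σ h v ≠ signLabel σ h w) : |h v| ≤ |h v - h w| := by
  rcases lt_trichotomy (h v) 0 with hv | hv | hv
  · have hw : 0 ≤ h w := by
      by_contra! hw
      simp [signLabel, hv.ne, hv.not_gt, hw.ne, hw.not_gt] at hvw
    rw [abs_of_neg hv, abs_sub_comm]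
    exact (le_sub_iff_add_le.mpr (by simpa using hw)).trans (le_abs_self _)
  · simp [hv]
  · have hw : h w ≤ 0 := by
      by_contra! hw
      simp [signLabel, hv.ne', hv, hw.ne', hw] at hvw
    rw [abs_of_pos hv]
    exact (le_sub_self_iff _ |>.mpr hw).trans (le_abs_self _)

lemma abs_head_le_of_signCochain_ne_zero {σ : V → ZMod 2} {M : R} {hs : List (V → R)}
    (hM : ∀ h ∈ hs, ∀ v w, H.Adj v w → |h v - h w| ≤ M) {x : V} {l : List V}
    (hl : (x :: l).IsChain H.Adj) (hsign : signCochain (hs.map (signLabel σ)) (x :: l) ≠ 0) :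
    ∀ h ∈ hs, |h x| ≤ hs.length • M := by
  induction hs generalizing x l with
  | nil => simp
  | cons h₀ hs ih =>
    obtain ⟨hM₀, hM⟩ := List.forall_mem_cons.mp hM
    cases l with
    | nil => simp [signCochain, coboundary_cons, vertexMul] at hsign
    | cons y l =>
      obtain ⟨hxy, hl⟩ := List.isChain_cons_cons.mp hl
      rw [List.map_cons, signCochain_cons_cons] at hsign
      have change : signLabel σ h₀ x ≠ signLabel σ h₀ y := fun heq ↦
        left_ne_zero_of_mul hsign (by rw [heq, CharTwo.add_self_eq_zero])
      have M_nonneg : 0 ≤ M := (abs_nonneg _).trans (hM₀ x y hxy)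
      rw [List.length_cons, succ_nsmul']
      refine List.forall_mem_cons.mpr ⟨?_, fun h hh ↦ ?_⟩
      · exact (abs_le_abs_sub_of_signLabel_ne change).trans <| (hM₀ x y hxy).trans <|
          le_add_of_nonneg_right (nsmul_nonneg M_nonneg _)
      · calc |h x| = |(h x - h y) + h y| := by rw [sub_add_cancel]
          _ ≤ |h x - h y| + |h y| := abs_add_le _ _
          _ ≤ M + hs.length • M :=
            add_le_add (hM h hh x y hxy) (ih hM hl (right_ne_zero_of_mul hsign) h hh)

theorem exists_reachable_forall_abs_le {σ : V → ZMod 2} (hσ : ∀ v, σ (H.antipode v) = σ v + 1)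
    {hs : List (V → R)} (hodd : ∀ h ∈ hs, ∀ v, h (H.antipode v) = -h v) {M : R}
    (hM : ∀ h ∈ hs, ∀ v w, H.Adj v w → |h v - h w| ≤ M) (v₀ : V) :
    ∃ v, H.Reachable v₀ hs.length v ∧ ∀ h ∈ hs, |h v| ≤ hs.length • M := by
  obtain ⟨l, hl, hreach, hsign⟩ := H.exists_chain_signCochain_ne_zero
    (es := hs.map (signLabel σ))
    (List.forall_mem_map.mpr fun h hh ↦ signLabel_antipode hσ (hodd h hh)) v₀
  rw [List.length_map] at hreach
  cases l with
  | nil => simp at hsign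
  | cons x l =>
    exact ⟨x, hreach x List.mem_cons_self, abs_head_le_of_signCochain_ne_zero hM hl hsign⟩

end Approximate

end AntipodalHomotopy

section Splitting

variable {m : ℕ}

/-- The homotopy on subsets of an `m`-element index set which adds the indices one by one, with
complementation as antipode. Two subsets are close if they differ in at most one index. -/
def subsetHomotopy (m : ℕ) : AntipodalHomotopy (Finset (Fin m)) where
  antipode S := Sᶜ
  antipode_antipode := compl_compl
  length := m
  stage t S := S ∪ ({i | i < t} : Finset (Fin m))
  stage_zero S := by simp
  stage_length_antipode S := by ext i; simp
  Adj S T := #(symmDiff S T) ≤ 1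
  adj_antipode h := by rwa [compl_symmDiff_compl]
  adj_stage t S T h := by
    refine (card_le_card fun i ↦ ?_).trans h
    simp only [mem_symmDiff, mem_union]
    tauto
  adj_stage_succ t S := by
    refine card_le_one.mpr fun i hi j hj ↦ ?_
    simp only [mem_symmDiff, mem_union, mem_filter_univ] at hi hj
    have := Fin.ext_iff (a := i) (b := j)
    grind

variable {A : Type*} [AddCommGroup A]

lemma sum_steps_eq_sub (h : ℕ → A) {s c : ℕ} (hsc : s ≤ c) (hcm : c ≤ m) :
    ∑ i : Fin m with s ≤ i.val ∧ i.val < c, (h (i + 1) - h i) = h c - h s := by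
  rw [sum_filter, Fin.sum_univ_eq_sum_range
    (fun i ↦ if s ≤ i ∧ i < c then h (i + 1) - h i else 0), ← sum_filter,
    ← sum_Ico_sub h hsc]
  congr 1
  ext i
  simp only [mem_filter, mem_range, mem_Ico]
  lia

/-- The sum of the increments of the path `h` over the steps in `S` from the time `s` onwards. -/
def displacementFrom (h : ℕ → A) (s : ℕ) (S : Finset (Fin m)) : A :=
  ∑ i ∈ S.filter fun i : Fin m ↦ s ≤ i, (h (i + 1) - h i)

lemma displacementFrom_stage (h : ℕ → A) {s t : ℕ} (hs : s ≤ m) (ht : t ≤ m)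
    (S : Finset (Fin m)) :
    displacementFrom h s ((subsetHomotopy m).stage t S) =
      (h (max s t) - h s) + displacementFrom h (max s t) S := by
  rw [displacementFrom, displacementFrom, ← sum_steps_eq_sub h (le_max_left s t) (max_le hs ht),
    ← sum_union]
  · congr 1
    ext i
    simp only [subsetHomotopy, mem_filter, mem_union, mem_univ]
    grind
  · rw [disjoint_left]
    simp only [mem_filter]
    grind

lemma displacementFrom_compl_stage (h : ℕ → A) (s t : ℕ) (S : Finset (Fin m)) :
    displacementFrom h s ((subsetHomotopy m).stage t S)ᶜ = displacementFrom h (max s t) Sᶜ := by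
  rw [displacementFrom, displacementFrom]
  congr 1
  ext i
  simp only [subsetHomotopy, mem_filter, mem_compl, mem_union, mem_univ]
  grind

/-- Each move along the homotopy puts one more segment of the path into one of the two parts, at the
cost of one more error `c`. -/
lemma seminorm_displacementFrom_add_le (f : AddGroupSeminorm A) {h : ℕ → A} {r c : ℝ}
    (hf : ∀ i j, i ≤ j → j ≤ m → f (h j - h i) ≤ (j - i) * r + c) {k : ℕ} {S : Finset (Fin m)}
    (hS : (subsetHomotopy m).Reachable univ k S) {s : ℕ} (hs : s ≤ m) :
    f (displacementFrom h s S) + f (displacementFrom h s Sᶜ) ≤ (m - s) * r + (k + 1) * c := by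
  induction hS generalizing s with
  | base =>
    have whole : displacementFrom h s (univ : Finset (Fin m)) = h m - h s := by
      simpa [displacementFrom] using sum_steps_eq_sub h hs le_rfl
    have none : displacementFrom h s (∅ : Finset (Fin m)) = 0 := by simp [displacementFrom]
    simpa [whole, none] using hf s m hs le_rfl
  | @antipode k S _ ih =>
    have swap : ((subsetHomotopy m).antipode S)ᶜ = S := compl_compl S
    rw [swap, add_comm]
    exact ih hs
  | @stage k t S _ ht ih =>
    rw [displacementFrom_stage h hs ht, displacementFrom_compl_stage]
    have first := hf s (max s t) (le_max_left s t) (max_le hs ht)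
    have later := ih (max_le hs ht)
    have triangle := map_add_le_add f (h (max s t) - h s) (displacementFrom h (max s t) S)
    push_cast at first later ⊢
    linarith

variable {R : Type*} [AddCommGroup R]

/-- The sum of `a`, with the signs of the terms outside `S` reversed. -/
def signedSum (a : Fin m → R) (S : Finset (Fin m)) : R :=
  ∑ i ∈ S, a i - ∑ i ∈ Sᶜ, a i

lemma signedSum_compl (a : Fin m → R) (S : Finset (Fin m)) :
    signedSum a Sᶜ = -signedSum a S := by
  simp [signedSum]

variable [LinearOrder R] [IsOrderedAddMonoid R]

lemma abs_signedSum_sub_le {a : Fin m → R} {M : R} (ha : ∀ i, |a i| ≤ M) (S T : Finset (Fin m)) :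
    |signedSum a S - signedSum a T| ≤ #(symmDiff S T) • 2 • M := by
  have expand (U : Finset (Fin m)) : signedSum a U = ∑ i, if i ∈ U then a i else -a i := by
    simp [signedSum, sum_ite, sub_eq_add_neg, filter_not, compl_eq_univ_sdiff]
  rw [expand, expand, ← sum_sub_distrib, ← sum_subset (subset_univ (symmDiff S T))]
  · refine (abs_sum_le_sum_abs _ _).trans (sum_le_card_nsmul _ _ _ fun i _ ↦ ?_)
    refine (abs_sub _ _).trans ?_
    rw [two_nsmul]
    refine add_le_add ?_ ?_ <;> split_ifs <;> simp [ha]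
  · intro i _ hi
    simp only [mem_symmDiff] at hi
    split_ifs <;> first | exact sub_self _ | tauto

theorem exists_balanced_splitting {ι : Type*} [Fintype ι] (f : AddGroupSeminorm A)
    (φ : ι → A →+ R) {h : ℕ → A} {r c : ℝ} {M : R} (hm : 0 < m)
    (hf : ∀ i j, i ≤ j → j ≤ m → f (h j - h i) ≤ (j - i) * r + c)
    (hM : ∀ i < m, ∀ j, |φ j (h (i + 1) - h i)| ≤ M) :
    ∃ p q : A, p + q = h m - h 0 ∧ (∀ j, |φ j (p - q)| ≤ Fintype.card ι • 2 • M) ∧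
      f p + f q ≤ m * r + (Fintype.card ι + 1) * c := by
  let step (i : Fin m) : A := h (i + 1) - h i
  let imbalance (j : ι) : Finset (Fin m) → R := signedSum fun i ↦ φ j (step i)
  let σ (S : Finset (Fin m)) : ZMod 2 := if ⟨0, hm⟩ ∈ S then 1 else 0
  have σ_compl (S : Finset (Fin m)) : σ Sᶜ = σ S + 1 := by
    by_cases h0 : ⟨0, hm⟩ ∈ S <;> simp [σ, h0, CharTwo.add_self_eq_zero]
  have imbalance_close (j : ι) (S T : Finset (Fin m)) (hST : #(symmDiff S T) ≤ 1) :
      |imbalance j S - imbalance j T| ≤ 2 • M := by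
    have M_nonneg : 0 ≤ M := (abs_nonneg _).trans (hM 0 hm j)
    exact (abs_signedSum_sub_le (fun i ↦ hM i i.2 j) S T).trans <|
      (nsmul_le_nsmul_left (nsmul_nonneg M_nonneg 2) hST).trans_eq (one_nsmul _)
  obtain ⟨S, hS, hbalanced⟩ := (subsetHomotopy m).exists_reachable_forall_abs_le σ_compl
    (hs := univ.toList.map imbalance) (M := 2 • M)
    (List.forall_mem_map.mpr fun j _ ↦ signedSum_compl _)
    (List.forall_mem_map.mpr fun j _ ↦ imbalance_close j) univ
  rw [List.length_map, length_toList, card_univ] at hS hbalanced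
  refine ⟨∑ i ∈ S, step i, ∑ i ∈ Sᶜ, step i, ?_, fun j ↦ ?_, ?_⟩
  · rw [sum_add_sum_compl]
    simpa [step] using sum_steps_eq_sub h m.zero_le le_rfl
  · simpa [imbalance, signedSum] using List.forall_mem_map.mp hbalanced j (by simp)
  · simpa [displacementFrom, step] using seminorm_displacementFrom_add_le f hf hS m.zero_le

end Splitting

section Doubling

variable {A : Type*}

/-- Geodesicity, up to the error `c`, of the translation invariant pseudometric `f (x - y)`: any
`g` is reached from `0` by paths of `m` almost evenly spaced steps. -/
def IsCoarselyGeodesic [AddCommGroup A] (f : AddGroupSeminorm A) (c : ℝ) : Prop :=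
  ∀ (g : A) (m : ℕ), m ≠ 0 → ∃ h : ℕ → A, h 0 = 0 ∧ h m = g ∧
    ∀ i j, i ≤ j → j ≤ m → f (h j - h i) ≤ (j - i) * (f g / m) + c

namespace IsCoarselyGeodesic

lemma nonneg [AddCommGroup A] {f : AddGroupSeminorm A} {c : ℝ} (hf : IsCoarselyGeodesic f c) :
    0 ≤ c := by
  obtain ⟨h, -, -, hh⟩ := hf 0 1 one_ne_zero
  simpa using hh 0 0 le_rfl zero_le_one

lemma exists_path [AddCommGroup A] {f : AddGroupSeminorm A} {c : ℝ} (hf : IsCoarselyGeodesic f c)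
    (g : A) :
    ∃ (m : ℕ) (r : ℝ) (h : ℕ → A), 0 < m ∧ m ≤ f g + 2 ∧ m * r = f g ∧ r ≤ 1 ∧ h 0 = 0 ∧ h m = g ∧
      ∀ i j, i ≤ j → j ≤ m → f (h j - h i) ≤ (j - i) * r + c := by
  set m : ℕ := ⌈f g⌉₊ + 1 with hm
  have m_pos : (0 : ℝ) < m := by positivity
  have le_m : f g ≤ m := (Nat.le_ceil _).trans (by simp [hm])
  have m_le : m ≤ f g + 2 := by
    push_cast [hm]
    linarith [Nat.ceil_lt_add_one (apply_nonneg f g)]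
  obtain ⟨h, h_zero, h_end, hh⟩ := hf g m (by positivity)
  exact ⟨m, f g / m, h, by positivity, m_le, mul_div_cancel₀ _ m_pos.ne',
    div_le_one_of_le₀ le_m m_pos.le, h_zero, h_end, hh⟩

lemma norm_le [SeminormedAddCommGroup A] {f : AddGroupSeminorm A} {c M : ℝ}
    (hf : IsCoarselyGeodesic f c) (hM : ∀ a, f a ≤ 1 + c → ‖a‖ ≤ M) (g : A) :
    ‖g‖ ≤ M * (f g + 2) := by
  obtain ⟨m, r, h, -, hm, -, hr, h_zero, h_end, hh⟩ := hf.exists_path g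
  have step_le (i : ℕ) (hi : i < m) : ‖h (i + 1) - h i‖ ≤ M :=
    hM _ ((hh i (i + 1) i.le_succ hi).trans (by push_cast; linarith))
  have M_nonneg : 0 ≤ M := by simpa using hM 0 (by simpa using by linarith [hf.nonneg])
  calc ‖g‖ = ‖∑ i ∈ range m, (h (i + 1) - h i)‖ := by rw [sum_range_sub, h_end, h_zero, sub_zero]
    _ ≤ m • M := by
      simpa using norm_sum_le_of_le (range m) fun i hi ↦ step_le i (mem_range.mp hi)
    _ ≤ M * (f g + 2) := by
      rw [nsmul_eq_mul, mul_comm]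
      gcongr

end IsCoarselyGeodesic

lemma seminorm_zsmul_le [AddCommGroup A] (f : AddGroupSeminorm A) (k : ℤ) (a : A) :
    f (k • a) ≤ ‖k‖ * f a :=
  letI := f.toSeminormedAddCommGroup
  norm_zsmul_le k a

variable {ι : Type*} [Fintype ι]

lemma exists_seminorm_le_mul_norm (f : AddGroupSeminorm (ι → ℤ)) :
    ∃ L : ℝ, 0 ≤ L ∧ ∀ g, f g ≤ L * ‖g‖ := by
  classical
  refine ⟨∑ i, f (Pi.single i 1), sum_nonneg fun i _ ↦ apply_nonneg f _, fun g ↦ ?_⟩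
  calc f g = f (∑ i, g i • Pi.single i (1 : ℤ)) := by rw [← pi_eq_sum_univ' g]
    _ ≤ ∑ i, f (g i • Pi.single i (1 : ℤ)) :=
        le_sum_of_subadditive f (map_zero f).le (map_add_le_add f) _ _
    _ ≤ ∑ i, f (Pi.single i 1) * ‖g‖ := by
        gcongr with i
        rw [mul_comm]
        exact (seminorm_zsmul_le f _ _).trans (by gcongr; exact norm_le_pi_norm g i)
    _ = (∑ i, f (Pi.single i 1)) * ‖g‖ := (sum_mul ..).symm

lemma norm_sub_le_of_add_eq_two_nsmul {a b g : ι → ℤ} (hab : a + b = 2 • g) :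
    ‖g - a‖ ≤ ‖a - b‖ := by
  refine (pi_norm_le_iff_of_nonneg (norm_nonneg _)).mpr fun j ↦
    le_trans ?_ (norm_le_pi_norm (a - b) j)
  have sum_eq : a j + b j = 2 * g j := by simpa using congrFun hab j
  rw [Int.norm_eq_abs, Int.norm_eq_abs, Pi.sub_apply, Pi.sub_apply]
  norm_cast
  grind

lemma IsCoarselyGeodesic.exists_two_mul_le {f : AddGroupSeminorm (ι → ℤ)} {c M : ℝ}
    (hf : IsCoarselyGeodesic f c) (hM : ∀ a, f a ≤ 1 + c → ‖a‖ ≤ M) :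
    ∃ C : ℝ, 0 ≤ C ∧ ∀ g, 2 * f g ≤ f (2 • g) + C := by
  obtain ⟨L, L_nonneg, hL⟩ := exists_seminorm_le_mul_norm f
  have M_nonneg : 0 ≤ M := by simpa using hM 0 (by simpa using by linarith [hf.nonneg])
  set B : ℝ := Fintype.card ι • 2 • M
  have B_nonneg : 0 ≤ B := by positivity
  refine ⟨(Fintype.card ι + 1) * c + 2 * (L * B), ?_, fun g ↦ ?_⟩
  · have := hf.nonneg
    positivity
  obtain ⟨m, r, h, m_pos, -, hmr, hr, h_zero, h_end, hh⟩ := hf.exists_path (2 • g)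
  let coord (j : ι) : (ι → ℤ) →+ ℝ := (Int.castAddHom ℝ).comp (Pi.evalAddMonoidHom _ j)
  have step_le (i : ℕ) (hi : i < m) (j : ι) : |coord j (h (i + 1) - h i)| ≤ M :=
    (norm_le_pi_norm (h (i + 1) - h i) j).trans <|
      hM _ ((hh i (i + 1) i.le_succ hi).trans (by push_cast; linarith))
  obtain ⟨p, q, hpq, hbalanced, hle⟩ := exists_balanced_splitting f coord m_pos hh step_le
  rw [h_end, h_zero, sub_zero] at hpq
  have dist_le : ‖p - q‖ ≤ B := (pi_norm_le_iff_of_nonneg B_nonneg).mpr hbalanced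
  have p_near : f (g - p) ≤ L * B := (hL _).trans <| by
    gcongr
    exact (norm_sub_le_of_add_eq_two_nsmul hpq).trans dist_le
  have q_near : f (g - q) ≤ L * B := (hL _).trans <| by
    gcongr
    exact (norm_sub_le_of_add_eq_two_nsmul ((add_comm q p).trans hpq)).trans
      ((norm_sub_rev q p).trans_le dist_le)
  have hp := map_add_le_add f (g - p) p
  have hq := map_add_le_add f (g - q) q
  rw [sub_add_cancel] at hp hq
  linarith

end Doubling

section StableNorm

lemma tendsto_div_natCast_of_abs_sub_le {a b : ℕ → ℝ} {x B : ℝ}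
    (ha : Tendsto (fun k : ℕ ↦ a k / k) atTop (𝓝 x)) (hab : ∀ k, |b k - a k| ≤ B) :
    Tendsto (fun k : ℕ ↦ b k / k) atTop (𝓝 x) := by
  have error : Tendsto (fun k : ℕ ↦ (b k - a k) / k) atTop (𝓝 0) := by
    refine squeeze_zero_norm (fun k ↦ ?_) (tendsto_const_div_atTop_nhds_zero_nat B)
    rw [Real.norm_eq_abs, abs_div, Nat.abs_cast]
    gcongr
    exact hab k
  simpa [sub_div] using ha.add error

variable {ι : Type*} [Fintype ι]

/-- The inclusion of the integer lattice in `ι → ℝ`. -/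
noncomputable def latticeInclusion : (ι → ℤ) →+ (ι → ℝ) := (Int.castAddHom ℝ).compLeft ι

/-- The lattice point obtained by rounding down all coordinates. -/
noncomputable def latticeFloor (v : ι → ℝ) : ι → ℤ := fun i ↦ ⌊v i⌋

lemma norm_latticeInclusion (g : ι → ℤ) : ‖latticeInclusion g‖ = ‖g‖ := by
  simp [latticeInclusion, Pi.norm_def, nnnorm, Int.norm_eq_abs]

lemma norm_latticeInclusion_latticeFloor_sub_le (v : ι → ℝ) :
    ‖latticeInclusion (latticeFloor v) - v‖ ≤ 1 := by
  refine (pi_norm_le_iff_of_nonneg zero_le_one).mpr fun i ↦ ?_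
  rw [← norm_neg, ← Pi.neg_apply, neg_sub]
  exact (Real.norm_of_nonneg (Int.fract_nonneg (v i))).trans_le (Int.fract_lt_one _).le

variable (f : AddGroupSeminorm (ι → ℤ))

lemma exists_abs_seminorm_sub_le_mul_norm :
    ∃ L : ℝ, 0 ≤ L ∧ ∀ a b, |f a - f b| ≤ L * ‖latticeInclusion a - latticeInclusion b‖ := by
  obtain ⟨L, L_nonneg, hL⟩ := exists_seminorm_le_mul_norm f
  refine ⟨L, L_nonneg, fun a b ↦ ?_⟩
  rw [← map_sub latticeInclusion, norm_latticeInclusion]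
  exact (abs_sub_map_le_sub f a b).trans (hL _)

/-- The limit of `f g / k`, where `g` is the lattice point rounding `k • v`, as `k` tends to
infinity. -/
noncomputable def stableLength (v : ι → ℝ) : ℝ :=
  limUnder atTop fun k : ℕ ↦ f (latticeFloor ((k : ℝ) • v)) / k

lemma tendsto_stableLength (v : ι → ℝ) :
    Tendsto (fun k : ℕ ↦ f (latticeFloor ((k : ℝ) • v)) / k) atTop (𝓝 (stableLength f v)) := by
  obtain ⟨L, L_nonneg, hL⟩ := exists_abs_seminorm_sub_le_mul_norm f
  let point (k : ℕ) : ι → ℤ := latticeFloor ((k : ℝ) • v)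
  have near (k : ℕ) := norm_latticeInclusion_latticeFloor_sub_le ((k : ℝ) • v)
  have subadditive : Subadditive fun k ↦ f (point k) + L * 3 := by
    intro j k
    have almost_additive : ‖latticeInclusion (point (j + k)) -
        latticeInclusion (point j + point k)‖ ≤ 3 := by
      have decompose : latticeInclusion (point (j + k)) - latticeInclusion (point j + point k) =
          (latticeInclusion (point (j + k)) - ((j + k : ℕ) : ℝ) • v) -
            (latticeInclusion (point j) - (j : ℝ) • v) -
            (latticeInclusion (point k) - (k : ℝ) • v) := by
        push_cast [map_add, add_smul]
        abel
      rw [decompose]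
      linarith [norm_sub_le_of_le (norm_sub_le_of_le (near (j + k)) (near j)) (near k)]
    have := (abs_le.mp ((hL _ _).trans (mul_le_mul_of_nonneg_left almost_additive L_nonneg))).2
    linarith [map_add_le_add f (point j) (point k)]
  have bounded : BddBelow (Set.range fun k : ℕ ↦ (f (point k) + L * 3) / k) := by
    refine ⟨0, Set.forall_mem_range.mpr fun k ↦ ?_⟩
    have := apply_nonneg f (point k)
    positivity
  exact tendsto_nhds_limUnder ⟨_, tendsto_div_natCast_of_abs_sub_le (B := L * 3)
    (subadditive.tendsto_lim bounded) fun k ↦ by simp [point, abs_of_nonneg L_nonneg]⟩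

lemma tendsto_stableLength_of_norm_sub_le {v : ι → ℝ} {a : ℕ → ι → ℤ} {B : ℝ}
    (ha : ∀ k : ℕ, ‖latticeInclusion (a k) - (k : ℝ) • v‖ ≤ B) :
    Tendsto (fun k : ℕ ↦ f (a k) / k) atTop (𝓝 (stableLength f v)) := by
  obtain ⟨L, L_nonneg, hL⟩ := exists_abs_seminorm_sub_le_mul_norm f
  refine tendsto_div_natCast_of_abs_sub_le (B := L * (B + 1)) (tendsto_stableLength f v) fun k ↦
    (hL _ _).trans (mul_le_mul_of_nonneg_left ?_ L_nonneg)
  rw [← sub_sub_sub_cancel_right _ _ ((k : ℝ) • v)]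
  exact norm_sub_le_of_le (ha k) (norm_latticeInclusion_latticeFloor_sub_le _)

lemma stableLength_add_le (v w : ι → ℝ) :
    stableLength f (v + w) ≤ stableLength f v + stableLength f w := by
  refine le_of_tendsto_of_tendsto' (tendsto_stableLength_of_norm_sub_le f (B := 2)
    (a := fun k ↦ latticeFloor ((k : ℝ) • v) + latticeFloor ((k : ℝ) • w)) fun k ↦ ?_)
    ((tendsto_stableLength f v).add (tendsto_stableLength f w)) fun k ↦ ?_
  · rw [map_add, smul_add, add_sub_add_comm]
    linarith [norm_add_le_of_le (norm_latticeInclusion_latticeFloor_sub_le ((k : ℝ) • v))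
      (norm_latticeInclusion_latticeFloor_sub_le ((k : ℝ) • w))]
  · rw [← add_div]
    gcongr
    exact map_add_le_add f _ _

lemma stableLength_neg (v : ι → ℝ) : stableLength f (-v) = stableLength f v := by
  refine tendsto_nhds_unique (tendsto_stableLength_of_norm_sub_le f (B := 1)
    (a := fun k ↦ -latticeFloor ((k : ℝ) • v)) fun k ↦ ?_)
    (by simpa only [map_neg_eq_map] using tendsto_stableLength f v)
  rw [map_neg, smul_neg, neg_sub_neg, norm_sub_rev]
  exact norm_latticeInclusion_latticeFloor_sub_le _

lemma stableLength_smul_of_nonneg {c : ℝ} (hc : 0 ≤ c) (v : ι → ℝ) :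
    stableLength f (c • v) = c * stableLength f v := by
  rcases hc.eq_or_lt with rfl | hc_pos
  · have limit := tendsto_stableLength_of_norm_sub_le f (v := 0) (a := 0) (B := 0) (by simp)
    simpa using tendsto_nhds_unique limit (by simp)
  have index_tendsto : Tendsto (fun k : ℕ ↦ ⌊c * k⌋₊) atTop atTop :=
    tendsto_nat_floor_atTop.comp (tendsto_natCast_atTop_atTop.const_mul_atTop hc_pos)
  have index_ratio : Tendsto (fun k : ℕ ↦ (⌊c * k⌋₊ / k : ℝ)) atTop (𝓝 c) :=
    (tendsto_nat_floor_mul_div_atTop hc).comp tendsto_natCast_atTop_atTop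
  refine tendsto_nhds_unique (tendsto_stableLength_of_norm_sub_le f (B := 1 + ‖v‖)
    (a := fun k ↦ latticeFloor ((⌊c * k⌋₊ : ℝ) • v)) fun k ↦ ?_) ?_
  · have index_near : |(⌊c * k⌋₊ - c * k : ℝ)| ≤ 1 := by
      have := Nat.floor_le (show 0 ≤ c * k by positivity)
      have := Nat.lt_floor_add_one (c * k)
      exact abs_le.mpr ⟨by linarith, by linarith⟩
    have shift : ‖(⌊c * k⌋₊ : ℝ) • v - (k : ℝ) • c • v‖ ≤ ‖v‖ := by
      rw [smul_smul, mul_comm (k : ℝ), ← sub_smul, norm_smul]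
      exact mul_le_of_le_one_left (norm_nonneg v) index_near
    exact norm_sub_le_norm_sub_add_norm_sub _ _ _ |>.trans <|
      add_le_add (norm_latticeInclusion_latticeFloor_sub_le _) shift
  · refine (index_ratio.mul ((tendsto_stableLength f v).comp index_tendsto)).congr fun k ↦ ?_
    rcases eq_or_ne ⌊c * k⌋₊ 0 with h | h
    · have origin : latticeFloor (0 : ι → ℝ) = 0 := funext fun _ ↦ Int.floor_zero
      simp [h, origin]
    · have : (⌊c * k⌋₊ : ℝ) ≠ 0 := mod_cast h
      rw [Function.comp_apply]
      field_simp

/-- The stable norm of `f`, the seminorm on `ι → ℝ` measuring the growth of `f` along lines. -/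
noncomputable def stableNorm : Seminorm ℝ (ι → ℝ) :=
  Seminorm.of (stableLength f) (stableLength_add_le f) fun c v ↦ by
    rcases le_total 0 c with hc | hc
    · rw [stableLength_smul_of_nonneg f hc, Real.norm_of_nonneg hc]
    · rw [← neg_neg (c • v), stableLength_neg, ← neg_smul,
        stableLength_smul_of_nonneg f (neg_nonneg.mpr hc), Real.norm_of_nonpos hc]

lemma tendsto_stableNorm (v : ι → ℝ) :
    Tendsto (fun k : ℕ ↦ f (latticeFloor ((k : ℝ) • v)) / k) atTop (𝓝 (stableNorm f v)) :=
  tendsto_stableLength f v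

lemma tendsto_nsmul_stableNorm (g : ι → ℤ) :
    Tendsto (fun k : ℕ ↦ f (k • g) / k) atTop (𝓝 (stableNorm f (latticeInclusion g))) :=
  tendsto_stableLength_of_norm_sub_le f (B := 0) fun k ↦ by
    rw [map_nsmul, Nat.cast_smul_eq_nsmul, sub_self, norm_zero]

lemma stableNorm_latticeInclusion_le (g : ι → ℤ) : stableNorm f (latticeInclusion g) ≤ f g := by
  refine le_of_tendsto' (tendsto_nsmul_stableNorm f g) fun k ↦ ?_
  refine div_le_of_le_mul₀ k.cast_nonneg (apply_nonneg f g) ?_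
  simpa [mul_comm] using seminorm_zsmul_le f k g

variable {f}

lemma le_stableNorm_latticeInclusion_add {C : ℝ} (hC : 0 ≤ C)
    (hf : ∀ g, 2 * f g ≤ f (2 • g) + C) (g : ι → ℤ) :
    f g ≤ stableNorm f (latticeInclusion g) + C := by
  have iterate (j : ℕ) : 2 ^ j * (f g - C) ≤ f ((2 ^ j) • g) - C := by
    induction j with
    | zero => simp
    | succ j ih =>
      have := hf ((2 ^ j) • g)
      rw [smul_smul, ← pow_succ'] at this
      rw [pow_succ']
      linarith
  rw [← sub_le_iff_le_add]
  refine ge_of_tendsto' ((tendsto_nsmul_stableNorm f g).comp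
    (tendsto_pow_atTop_atTop_of_one_lt one_lt_two)) fun j ↦ ?_
  rw [Function.comp_apply, le_div_iff₀ (by positivity)]
  push_cast
  linarith [iterate j]

lemma tendsto_norm_latticeFloor_div (v : ι → ℝ) :
    Tendsto (fun k : ℕ ↦ ‖latticeFloor ((k : ℝ) • v)‖ / k) atTop (𝓝 ‖v‖) := by
  have line : Tendsto (fun k : ℕ ↦ ‖(k : ℝ) • v‖ / k) atTop (𝓝 ‖v‖) := by
    refine tendsto_const_nhds.congr' ?_
    filter_upwards [eventually_ne_atTop 0] with k hk
    rw [norm_smul, Real.norm_natCast, mul_div_cancel_left₀ _ (Nat.cast_ne_zero.mpr hk)]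
  refine tendsto_div_natCast_of_abs_sub_le (B := 1) line fun k ↦ ?_
  rw [← norm_latticeInclusion]
  exact (abs_norm_sub_norm_le _ _).trans (norm_latticeInclusion_latticeFloor_sub_le _)

lemma exists_stableNorm_le_mul_norm (f : AddGroupSeminorm (ι → ℤ)) :
    ∃ L : ℝ, 0 ≤ L ∧ ∀ v, stableNorm f v ≤ L * ‖v‖ := by
  obtain ⟨L, L_nonneg, hL⟩ := exists_seminorm_le_mul_norm f
  refine ⟨L, L_nonneg, fun v ↦ le_of_tendsto_of_tendsto' (tendsto_stableNorm f v)
    ((tendsto_norm_latticeFloor_div v).const_mul L) fun k ↦ ?_⟩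
  rw [← mul_div_assoc]
  gcongr
  exact hL _

lemma norm_le_mul_stableNorm {M c : ℝ} (hf : ∀ g, ‖g‖ ≤ M * (f g + c)) (v : ι → ℝ) :
    ‖v‖ ≤ M * stableNorm f v := by
  have upper := tendsto_div_natCast_of_abs_sub_le (B := |c|) (tendsto_stableNorm f v)
    (b := fun k ↦ f (latticeFloor ((k : ℝ) • v)) + c) fun k ↦ by simp
  refine le_of_tendsto_of_tendsto' (tendsto_norm_latticeFloor_div v) (upper.const_mul M) fun k ↦ ?_
  rw [← mul_div_assoc]
  gcongr
  exact hf _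

end StableNorm

section Orbit

variable {X : Type*} [PseudoMetricSpace X] {G : Type*} [AddCommGroup G] [AddAction G X]

/-- A space in which any two points are joined by a minimizing geodesic. -/
def IsGeodesicSpace (X : Type*) [PseudoMetricSpace X] : Prop :=
  ∀ x y : X, ∃ γ : ℝ → X, γ 0 = x ∧ γ (dist x y) = y ∧
    ∀ s ∈ Set.Icc 0 (dist x y), ∀ t ∈ Set.Icc 0 (dist x y), dist (γ s) (γ t) = |s - t|

section IsIsometricVAdd

variable [IsIsometricVAdd G X]

variable (G) in
/-- The displacement of the base point `x₀` under an isometric action, as a seminorm on the acting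
group. -/
def orbitSeminorm (x₀ : X) : AddGroupSeminorm G where
  toFun g := dist x₀ (g +ᵥ x₀)
  map_zero' := by simp
  add_le' g h := by
    rw [add_vadd]
    exact (dist_triangle _ (g +ᵥ x₀) _).trans_eq (by rw [dist_vadd])
  neg' g := by rw [← dist_vadd g, vadd_neg_vadd, dist_comm]

lemma dist_vadd_vadd_eq_orbitSeminorm (x₀ : X) (g h : G) :
    dist (g +ᵥ x₀) (h +ᵥ x₀) = orbitSeminorm G x₀ (h - g) := by
  change _ = dist x₀ ((h - g) +ᵥ x₀)
  rw [← dist_vadd g x₀, vadd_vadd, add_sub_cancel]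

lemma abs_orbitSeminorm_sub_dist_le {x₀ x y : X} {g h : G} {R : ℝ}
    (hx : dist x (g +ᵥ x₀) ≤ R) (hy : dist y (h +ᵥ x₀) ≤ R) :
    |orbitSeminorm G x₀ (h - g) - dist x y| ≤ 2 * R := by
  rw [← dist_vadd_vadd_eq_orbitSeminorm, abs_sub_comm, two_mul]
  exact (dist_dist_dist_le _ _ _ _).trans (add_le_add hx hy)

lemma IsGeodesicSpace.isCoarselyGeodesic_orbitSeminorm (hX : IsGeodesicSpace X) {x₀ : X} {R : ℝ}
    (hR : ∀ x : X, ∃ g : G, dist x (g +ᵥ x₀) ≤ R) :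
    IsCoarselyGeodesic (orbitSeminorm G x₀) (2 * R) := by
  intro g m hm
  obtain ⟨γ, γ_zero, γ_end, γ_isometric⟩ := hX x₀ (g +ᵥ x₀)
  choose p hp using hR
  have R_nonneg : 0 ≤ R := dist_nonneg.trans (hp x₀)
  set r : ℝ := orbitSeminorm G x₀ g / m with hr
  have r_nonneg : 0 ≤ r := div_nonneg (apply_nonneg _ g) m.cast_nonneg
  have m_mul_r : m * r = dist x₀ (g +ᵥ x₀) := mul_div_cancel₀ _ (Nat.cast_ne_zero.mpr hm)
  let h (i : ℕ) : G := if i = 0 then 0 else if i = m then g else p (γ (i * r))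
  have h_near (i : ℕ) : dist (γ (i * r)) (h i +ᵥ x₀) ≤ R := by
    rcases eq_or_ne i 0 with rfl | hi
    · simpa [h, γ_zero] using R_nonneg
    rcases eq_or_ne i m with rfl | him
    · simpa [h, hi, m_mul_r, γ_end] using R_nonneg
    · simpa [h, hi, him] using hp (γ (i * r))
  refine ⟨h, by simp [h], by simp [h, hm], fun i j hij hjm ↦ ?_⟩
  have mem_Icc {k : ℕ} (hk : k ≤ m) : k * r ∈ Set.Icc 0 (dist x₀ (g +ᵥ x₀)) :=
    ⟨by positivity, m_mul_r ▸ by gcongr⟩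
  have dist_eq : dist (γ (i * r)) (γ (j * r)) = (j - i) * r := by
    have : (0 : ℝ) ≤ j - i := sub_nonneg.mpr (mod_cast hij)
    rw [γ_isometric _ (mem_Icc (hij.trans hjm)) _ (mem_Icc hjm), abs_sub_comm, ← sub_mul,
      abs_of_nonneg (by positivity)]
  linarith [(abs_le.mp (abs_orbitSeminorm_sub_dist_le (h_near i) (h_near j))).2]

lemma exists_dist_vadd_le_of_isCompact {K : Set X} (hK : IsCompact K)
    (hcover : ∀ x : X, ∃ g : G, g +ᵥ x ∈ K) (x₀ : X) : ∃ R, ∀ x, ∃ g : G, dist x (g +ᵥ x₀) ≤ R := by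
  obtain ⟨R, hR⟩ := hK.isBounded.subset_closedBall x₀
  refine ⟨R, fun x ↦ ?_⟩
  obtain ⟨g, hg⟩ := hcover x
  refine ⟨-g, ?_⟩
  rw [← dist_vadd g, vadd_neg_vadd]
  exact hR hg

end IsIsometricVAdd

lemma finite_dist_vadd_le_of_properlyDiscontinuous [ProperSpace X]
    (hpd : ∀ K : Set X, IsCompact K → {g : G | (((g +ᵥ ·) '' K) ∩ K).Nonempty}.Finite)
    (x₀ : X) (r : ℝ) : {g : G | dist x₀ (g +ᵥ x₀) ≤ r}.Finite := by
  refine (hpd _ (isCompact_closedBall x₀ r)).subset fun g hg ↦ ⟨g +ᵥ x₀, ⟨x₀, ?_, rfl⟩, ?_⟩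
  · exact Metric.mem_closedBall_self (dist_nonneg.trans hg)
  · rwa [Metric.mem_closedBall, dist_comm]

end Orbit

section CoarseIsometry

variable {ι : Type*} [Fintype ι]

lemma IsCoarselyGeodesic.exists_le_stableNorm_add {f : AddGroupSeminorm (ι → ℤ)} {c M : ℝ}
    (hf : IsCoarselyGeodesic f c) (hM : ∀ a, f a ≤ 1 + c → ‖a‖ ≤ M) :
    ∃ C : ℝ, 0 ≤ C ∧ ∀ g, f g ≤ stableNorm f (latticeInclusion g) + C := by
  obtain ⟨C, C_nonneg, hC⟩ := hf.exists_two_mul_le hM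
  exact ⟨C, C_nonneg, le_stableNorm_latticeInclusion_add C_nonneg hC⟩

lemma IsCoarselyGeodesic.stableNorm_eq_zero_iff {f : AddGroupSeminorm (ι → ℤ)} {c M : ℝ}
    (hf : IsCoarselyGeodesic f c) (hM : ∀ a, f a ≤ 1 + c → ‖a‖ ≤ M) {v : ι → ℝ} :
    stableNorm f v = 0 ↔ v = 0 := by
  refine ⟨fun hv ↦ ?_, fun hv ↦ hv ▸ map_zero _⟩
  simpa [hv] using norm_le_mul_stableNorm (hf.norm_le hM) v

variable {X : Type*} [PseudoMetricSpace X] [AddAction (ι → ℤ) X] [IsIsometricVAdd (ι → ℤ) X]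

lemma exists_coarse_isometry_stableNorm {x₀ : X} {R C : ℝ}
    (hR : ∀ x : X, ∃ g : ι → ℤ, dist x (g +ᵥ x₀) ≤ R) (hC : ∀ g, orbitSeminorm (ι → ℤ) x₀ g ≤
      stableNorm (orbitSeminorm (ι → ℤ) x₀) (latticeInclusion g) + C) :
    ∃ (D : ℝ) (p : X → ι → ℝ),
      (∀ a b, |stableNorm (orbitSeminorm (ι → ℤ) x₀) (p a - p b) - dist a b| ≤ D) ∧
      ∀ v, ∃ a, stableNorm (orbitSeminorm (ι → ℤ) x₀) (p a - v) ≤ D := by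
  set f := orbitSeminorm (ι → ℤ) x₀
  choose p hp using hR
  obtain ⟨L, L_nonneg, hL⟩ := exists_stableNorm_le_mul_norm f
  have R_nonneg : 0 ≤ R := dist_nonneg.trans (hp x₀)
  have C_nonneg : 0 ≤ C := by simpa using hC 0
  refine ⟨C + 2 * R + L, fun x ↦ latticeInclusion (p x), fun a b ↦ ?_, fun v ↦ ?_⟩
  · have lattice_close : |f (p a - p b) - dist a b| ≤ 2 * R := by
      rw [dist_comm]
      exact abs_orbitSeminorm_sub_dist_le (hp b) (hp a)
    have lower := stableNorm_latticeInclusion_le f (p a - p b)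
    have upper := hC (p a - p b)
    rw [map_sub latticeInclusion] at lower upper
    rw [abs_le] at lattice_close ⊢
    constructor <;> linarith
  · set g := latticeFloor v
    set a := g +ᵥ x₀
    have g_close : stableNorm f (latticeInclusion g - v) ≤ L :=
      (hL _).trans <| mul_le_of_le_one_right L_nonneg <|
        norm_latticeInclusion_latticeFloor_sub_le v
    have p_close : stableNorm f (latticeInclusion (p a) - latticeInclusion g) ≤ R := by
      rw [← map_sub latticeInclusion]
      refine (stableNorm_latticeInclusion_le f _).trans ?_
      rw [← dist_vadd_vadd_eq_orbitSeminorm]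
      exact hp a
    have triangle := map_add_le_add (stableNorm f) (latticeInclusion (p a) - latticeInclusion g)
      (latticeInclusion g - v)
    rw [sub_add_sub_cancel] at triangle
    exact ⟨a, by linarith⟩

end CoarseIsometry

theorem periodic_metric_close_to_norm_general {X : Type*} [PseudoMetricSpace X]
    (hgeo : IsGeodesicSpace X) {ι : Type*} [Finite ι] [AddAction (ι → ℤ) X]
    [IsIsometricVAdd (ι → ℤ) X] {x₀ : X}
    (hcobounded : ∃ R, ∀ x : X, ∃ g : ι → ℤ, dist x (g +ᵥ x₀) ≤ R)
    (hfinite : ∀ r, {g : ι → ℤ | dist x₀ (g +ᵥ x₀) ≤ r}.Finite) :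
    ∃ ℓ : (ι → ℤ) → ℝ,
      (∀ g : ι → ℤ, Tendsto (fun k : ℕ ↦ dist x₀ ((k • g) +ᵥ x₀) / (k : ℝ)) atTop (𝓝 (ℓ g))) ∧
      (∃ ν : EuclideanSpace ℝ ι → ℝ,
        (∀ v, 0 ≤ ν v) ∧ (∀ v, ν v = 0 ↔ v = 0) ∧
        (∀ (c : ℝ) (v), ν (c • v) = |c| * ν v) ∧
        (∀ v w, ν (v + w) ≤ ν v + ν w) ∧
        (∀ g : ι → ℤ, ν ((EuclideanSpace.equiv ι ℝ).symm (fun i ↦ (g i : ℝ))) = ℓ g) ∧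
        (∃ C : ℝ, 0 ≤ C ∧ ∀ g : ι → ℤ,
          ℓ g ≤ dist x₀ (g +ᵥ x₀) ∧ dist x₀ (g +ᵥ x₀) ≤ ℓ g + C) ∧
        (∃ (D : ℝ) (Φ : X → EuclideanSpace ℝ ι),
          (∀ a b : X, |ν (Φ a - Φ b) - dist a b| ≤ D) ∧
          (∀ v : EuclideanSpace ℝ ι, ∃ a : X, ν (Φ a - v) ≤ D))) := by
  cases nonempty_fintype ι
  obtain ⟨R, hR⟩ := hcobounded
  set f := orbitSeminorm (ι → ℤ) x₀
  set E := EuclideanSpace.equiv ι ℝ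
  have coarsely_geodesic : IsCoarselyGeodesic f (2 * R) :=
    hgeo.isCoarselyGeodesic_orbitSeminorm hR
  obtain ⟨M, hM⟩ : ∃ M, ∀ g, f g ≤ 1 + 2 * R → ‖g‖ ≤ M :=
    isBounded_iff_forall_norm_le.mp (hfinite (1 + 2 * R)).isBounded
  obtain ⟨C, C_nonneg, hC⟩ := coarsely_geodesic.exists_le_stableNorm_add hM
  obtain ⟨D, p, p_dist, p_dense⟩ := exists_coarse_isometry_stableNorm hR hC
  have definite (v : EuclideanSpace ℝ ι) : stableNorm f (E v) = 0 ↔ v = 0 :=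
    (coarsely_geodesic.stableNorm_eq_zero_iff hM).trans E.map_eq_zero_iff
  exact ⟨fun g ↦ stableNorm f (latticeInclusion g), tendsto_nsmul_stableNorm f,
    fun v ↦ stableNorm f (E v), fun v ↦ apply_nonneg _ _, definite,
    fun c v ↦ map_smul_eq_mul (stableNorm f) c (E v), fun v w ↦ map_add_le_add (stableNorm f) _ _,
    fun g ↦ rfl, ⟨C, C_nonneg, fun g ↦ ⟨stableNorm_latticeInclusion_le f g, hC g⟩⟩,
    D, fun x ↦ E.symm (p x), p_dist, fun v ↦ p_dense (E v)⟩

/-- If `ℤⁿ` acts cocompactly and properly discontinuously by isometries on a proper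
geodesic metric space `X`, and there is a continuous map `F : X → ℝⁿ` equivariant with
respect to the standard translation action of `ℤⁿ` on `ℝⁿ`, then, for a fixed `x₀ ∈ X`:
the stable norm limit `‖g‖ = lim d(x₀, gᵏx₀)/k` exists for all `g`; it extends to a
norm `ν` on `ℝⁿ`; `‖g‖ ≤ d(x₀, g x₀) ≤ ‖g‖ + C` for a uniform constant `C ≥ 0`; and
(finiteness of the Gromov–Hausdorff distance) there is a map `Φ : X → ℝⁿ` which
distorts distances (measured by `ν` on `ℝⁿ`) by at most an additive constant and
has coarsely dense image. -/
theorem periodic_metric_close_to_norm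
    {X : Type*} [MetricSpace X] [ProperSpace X]
    (hgeo : ∀ x y : X, ∃ γ : ℝ → X, γ 0 = x ∧ γ (dist x y) = y ∧
      ∀ s ∈ Set.Icc (0 : ℝ) (dist x y), ∀ t ∈ Set.Icc (0 : ℝ) (dist x y),
        dist (γ s) (γ t) = |s - t|)
    (n : ℕ) [AddAction (Fin n → ℤ) X]
    (hisom : ∀ (g : Fin n → ℤ) (a b : X), dist (g +ᵥ a) (g +ᵥ b) = dist a b)
    (hcocompact : ∃ K : Set X, IsCompact K ∧ ∀ x : X, ∃ g : Fin n → ℤ, g +ᵥ x ∈ K)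
    (hpd : ∀ K : Set X, IsCompact K →
      {g : Fin n → ℤ | (((g +ᵥ ·) '' K) ∩ K).Nonempty}.Finite)
    (F : X → EuclideanSpace ℝ (Fin n)) (hF : Continuous F)
    (hequiv : ∀ (g : Fin n → ℤ) (x : X),
      F (g +ᵥ x) = F x + (EuclideanSpace.equiv (Fin n) ℝ).symm (fun i => (g i : ℝ)))
    (x₀ : X) :
    ∃ ℓ : (Fin n → ℤ) → ℝ,
      (∀ g : Fin n → ℤ, Filter.Tendsto
        (fun k : ℕ => dist x₀ ((k • g) +ᵥ x₀) / (k : ℝ)) Filter.atTop (nhds (ℓ g))) ∧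
      (∃ ν : EuclideanSpace ℝ (Fin n) → ℝ,
        (∀ v, 0 ≤ ν v) ∧ (∀ v, ν v = 0 ↔ v = 0) ∧
        (∀ (c : ℝ) (v), ν (c • v) = |c| * ν v) ∧
        (∀ v w, ν (v + w) ≤ ν v + ν w) ∧
        (∀ g : Fin n → ℤ, ν ((EuclideanSpace.equiv (Fin n) ℝ).symm (fun i => (g i : ℝ))) = ℓ g) ∧
        (∃ C : ℝ, 0 ≤ C ∧ ∀ g : Fin n → ℤ,
          ℓ g ≤ dist x₀ (g +ᵥ x₀) ∧ dist x₀ (g +ᵥ x₀) ≤ ℓ g + C) ∧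
        (∃ (D : ℝ) (Φ : X → EuclideanSpace ℝ (Fin n)),
          (∀ a b : X, |ν (Φ a - Φ b) - dist a b| ≤ D) ∧
          (∀ v : EuclideanSpace ℝ (Fin n), ∃ a : X, ν (Φ a - v) ≤ D))) := by
  have : IsIsometricVAdd (Fin n → ℤ) X := ⟨fun g ↦ Isometry.of_dist_eq (hisom g)⟩
  have ⟨_, hK, hcover⟩ := hcocompact
  exact periodic_metric_close_to_norm_general hgeo (exists_dist_vadd_le_of_isCompact hK hcover x₀)
    (finite_dist_vadd_le_of_properlyDiscontinuous hpd x₀)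
end

section
/- Let f : ℕ₊ → (0,∞) be a sub-additive function (f(m+n) ≤ f(m) + f(n) for all m,n) such that f(n) → ∞ as n → ∞ and f(n) ≤ f(2n)/2 + C for some C > 0 and all n. Then c := lim_{n→∞} f(n)/n exists, c > 0, and c·n ≤ f(n) ≤ c·n + 2C for all n. -/
/-!
If `u` is subadditive and `u - D` grows at least by the factor `b` under `n ↦ b * n`, then
`u p / p ≥ (u n - D) / n` at every `p = b ^ k * n`. Were `u m / m` smaller than `(u n - D) / n` for
some `m`, subadditivity would keep `u p / p` below that value for all large `p`. Hence every
`(u n - D) / n` is at most `c = inf u m / m`, which is the limit by Fekete's lemma. The bound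
`u n ≤ u (2 * n) / 2 + C` is the case `b = 2`, `D = 2 * C`.
-/

open Filter Function Set

section Dilation

variable {u : ℕ → ℝ} {b : ℕ} {D : ℝ}

theorem pow_mul_sub_le_of_dilation (hb : b ≠ 0) (h : ∀ n ≠ 0, b * (u n - D) ≤ u (b * n) - D)
    {n : ℕ} (hn : n ≠ 0) (k : ℕ) : b ^ k * (u n - D) ≤ u (b ^ k * n) - D := by
  induction k with
  | zero => simp
  | succ k ih =>
    calc (b : ℝ) ^ (k + 1) * (u n - D) = b * (b ^ k * (u n - D)) := by ring
      _ ≤ b * (u (b ^ k * n) - D) := by gcongr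
      _ ≤ u (b * (b ^ k * n)) - D := h _ (by positivity)
      _ = u (b ^ (k + 1) * n) - D := by rw [pow_succ', mul_assoc]

theorem nonneg_of_subadditive_of_dilation (hu : Subadditive u) (hb : 1 < b)
    (h : ∀ n ≠ 0, b * (u n - D) ≤ u (b * n) - D) : 0 ≤ D := by
  obtain ⟨a, rfl⟩ : ∃ a, b = a + 1 := ⟨b - 1, by lia⟩
  have ha : (0 : ℝ) < a := Nat.cast_pos.2 (by lia)
  have hupper : u (a + 1) ≤ a * u 1 + u 1 := by simpa using hu.apply_mul_add_le a 1 1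
  have hlower : (a + 1) * (u 1 - D) ≤ u (a + 1) - D := by simpa using h 1 one_ne_zero
  exact nonneg_of_mul_nonneg_right (by linarith : 0 ≤ a * D) ha

theorem sub_div_le_apply_pow_mul_div_of_dilation (hb : b ≠ 0) (hD : 0 ≤ D)
    (h : ∀ n ≠ 0, b * (u n - D) ≤ u (b * n) - D) {n : ℕ} (hn : n ≠ 0) (k : ℕ) :
    (u n - D) / n ≤ u (b ^ k * n) / (b ^ k * n : ℕ) :=
  calc (u n - D) / n = (b ^ k * (u n - D)) / (b ^ k * n) :=
        (mul_div_mul_left _ _ (by positivity)).symm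
    _ ≤ u (b ^ k * n) / (b ^ k * n) := by
        gcongr
        exact (pow_mul_sub_le_of_dilation hb h hn k).trans (sub_le_self _ hD)
    _ = u (b ^ k * n) / (b ^ k * n : ℕ) := by push_cast; rfl

theorem sub_div_le_div_of_dilation (hu : Subadditive u) (hb : 1 < b)
    (h : ∀ n ≠ 0, b * (u n - D) ≤ u (b * n) - D) {m n : ℕ} (hm : m ≠ 0) (hn : n ≠ 0) :
    (u n - D) / n ≤ u m / m := by
  by_contra! hlt
  have hD : 0 ≤ D := nonneg_of_subadditive_of_dilation hu hb h
  have htop : Tendsto (fun k ↦ b ^ k * n) atTop atTop :=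
    (tendsto_pow_atTop_atTop_of_one_lt hb).atTop_mul_const' hn.bot_lt
  obtain ⟨k, hk⟩ := (htop.eventually (hu.eventually_div_lt_of_div_lt hm hlt)).exists
  exact hk.not_ge (sub_div_le_apply_pow_mul_div_of_dilation (by lia) hD h hn k)

theorem bddBelow_range_div_of_dilation (hu : Subadditive u) (hb : 1 < b)
    (h : ∀ n ≠ 0, b * (u n - D) ≤ u (b * n) - D) : BddBelow (range fun n ↦ u n / n) := by
  refine ⟨min 0 (u 1 - D), forall_mem_range.2 fun n ↦ ?_⟩
  rcases eq_or_ne n 0 with rfl | hn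
  · simp
  · exact min_le_of_right_le (by simpa using sub_div_le_div_of_dilation hu hb h hn one_ne_zero)

theorem sub_le_lim_mul_of_dilation (hu : Subadditive u) (hb : 1 < b)
    (h : ∀ n ≠ 0, b * (u n - D) ≤ u (b * n) - D) {n : ℕ} (hn : n ≠ 0) :
    u n - D ≤ hu.lim * n := by
  have hlim : (u n - D) / n ≤ hu.lim :=
    ge_of_tendsto (hu.tendsto_lim (bddBelow_range_div_of_dilation hu hb h)) <|
      (eventually_ne_atTop 0).mono fun _ hm ↦ sub_div_le_div_of_dilation hu hb h hm hn
  rwa [div_le_iff₀ (by positivity)] at hlim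

end Dilation

section ExtendByZero

variable {f : ℕ+ → ℝ}

theorem subadditive_extend_pnat_coe (hsub : ∀ m n, f (m + n) ≤ f m + f n) :
    Subadditive (extend ((↑) : ℕ+ → ℕ) f 0) := by
  intro m n
  rcases m.eq_zero_or_pos with rfl | hm
  · simp
  rcases n.eq_zero_or_pos with rfl | hn
  · simp
  lift m to ℕ+ using hm
  lift n to ℕ+ using hn
  simpa only [← PNat.add_coe, PNat.coe_injective.extend_apply] using hsub m n

theorem dilation_extend_pnat_coe {b : ℕ+} {D : ℝ} (h : ∀ n, b * (f n - D) ≤ f (b * n) - D)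
    {n : ℕ} (hn : n ≠ 0) :
    b * (extend ((↑) : ℕ+ → ℕ) f 0 n - D) ≤ extend ((↑) : ℕ+ → ℕ) f 0 (b * n) - D := by
  lift n to ℕ+ using hn.bot_lt
  simpa only [← PNat.mul_coe, PNat.coe_injective.extend_apply] using h n

end ExtendByZero

theorem subadditive_doubling_bound_general
    (f : ℕ+ → ℝ) (hsub : ∀ m n : ℕ+, f (m + n) ≤ f m + f n) (C : ℝ)
    (hdouble : ∀ n : ℕ+, f n ≤ f (2 * n) / 2 + C) (hlarge : ∃ n, 2 * C < f n) :
    ∃ c : ℝ, Tendsto (fun n : ℕ+ ↦ f n / (n : ℝ)) atTop (nhds c) ∧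
      0 < c ∧ ∀ n : ℕ+, c * (n : ℝ) ≤ f n ∧ f n ≤ c * (n : ℝ) + 2 * C := by
  have hu := subadditive_extend_pnat_coe hsub
  have hdil (n : ℕ) (hn : n ≠ 0) := dilation_extend_pnat_coe (f := f) (b := 2) (D := 2 * C)
    (fun n ↦ by push_cast; linarith [hdouble n]) hn
  have hbdd := bddBelow_range_div_of_dilation hu one_lt_two hdil
  have hlower (n : ℕ+) : hu.lim * n ≤ f n := by
    have hn : (0 : ℝ) < n := mod_cast n.pos
    simpa only [PNat.coe_injective.extend_apply, le_div_iff₀ hn]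
      using hu.lim_le_div hbdd n.ne_zero
  have hupper (n : ℕ+) : f n - 2 * C ≤ hu.lim * n := by
    simpa only [PNat.coe_injective.extend_apply]
      using sub_le_lim_mul_of_dilation hu one_lt_two hdil n.ne_zero
  have hlim : Tendsto (fun n : ℕ+ ↦ f n / (n : ℝ)) atTop (nhds hu.lim) := by
    simpa only [comp_def, PNat.coe_injective.extend_apply] using
      (hu.tendsto_lim hbdd).comp tendsto_PNat_val_atTop_atTop
  have hlim_pos : 0 < hu.lim := by
    obtain ⟨n, hn⟩ := hlarge
    exact pos_of_mul_pos_left ((sub_pos.2 hn).trans_le (hupper n)) n.val.cast_nonneg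
  exact ⟨hu.lim, hlim, hlim_pos, fun n ↦ ⟨hlower n, sub_le_iff_le_add.1 (hupper n)⟩⟩

/-- Lemma on sub-additive functions: if `f : ℕ₊ → (0, ∞)` is sub-additive, tends to
infinity, and satisfies `f(n) ≤ f(2n)/2 + C`, then `c := lim f(n)/n` exists, is
positive, and `c·n ≤ f(n) ≤ c·n + 2C` for all `n`. -/
theorem subadditive_doubling_bound
    (f : ℕ+ → ℝ) (hpos : ∀ n : ℕ+, 0 < f n)
    (hsub : ∀ m n : ℕ+, f (m + n) ≤ f m + f n)
    (hinf : Filter.Tendsto f Filter.atTop Filter.atTop)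
    (C : ℝ) (hC : 0 < C)
    (hdouble : ∀ n : ℕ+, f n ≤ f (2 * n) / 2 + C) :
    ∃ c : ℝ,
      Filter.Tendsto (fun n : ℕ+ => f n / (n : ℝ)) Filter.atTop (nhds c) ∧
      0 < c ∧ ∀ n : ℕ+, c * (n : ℝ) ≤ f n ∧ f n ≤ c * (n : ℝ) + 2 * C :=
  subadditive_doubling_bound_general f hsub C hdouble
    (hinf.eventually_gt_atTop (2 * C)).exists
end
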